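/- For any NAT T, the formulas σ(T) and σ*(T) are logically equivalent modulo the auxiliary atoms A*(T): every model of σ(T) can be extended on A*(T) to a model of σ*(T), and the restriction to At of every model of σ*(T) is a model of σ(T). Moreover, if T is a single block B and the renaming in the construction of σ*(T) takes place inside the nesting, then an interpretation M of At is a witness model of B if and only if M = N[At] for some model N of σ*(T). -/

import Mathlib

/-!
STATEMENT 4: the embedding `σ*` of NATs into `L_CIRC`: for any NAT `T`, `σ(T)` and
`σ*(T)` are logically equivalent modulo the auxiliary atoms `A*(T)`, and for a single
block the witness models of `T` are the restrictions of the models of `σ*(T)`.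
-/

namespace NestedCirc

universe u
variable {α : Type u}

/-- Propositional formulas over atoms `α`. -/
inductive PForm (α : Type u) : Type u where
  | tru : PForm α
  | fls : PForm α
  | atom : α → PForm α
  | neg : PForm α → PForm α
  | conj : PForm α → PForm α → PForm α
  | disj : PForm α → PForm α → PForm α

namespace PForm

/-- Satisfaction of a propositional formula in an interpretation (set of true atoms). -/
def sat : PForm α → Set α → Prop
  | tru, _ => True
  | fls, _ => False
  | atom a, M => a ∈ M
  | neg φ, M => ¬ φ.sat M
  | conj φ ψ, M => φ.sat M ∧ ψ.sat M
  | disj φ ψ, M => φ.sat M ∨ ψ.sat M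

/-- Implication `φ → ψ`. -/
def imp (φ ψ : PForm α) : PForm α := disj (neg φ) ψ

/-- Equivalence `φ ↔ ψ`. -/
def iffF (φ ψ : PForm α) : PForm α := conj (imp φ ψ) (imp ψ φ)

/-- The atoms occurring in a formula. -/
def atoms : PForm α → Set α
  | tru => ∅
  | fls => ∅
  | atom a => {a}
  | neg φ => φ.atoms
  | conj φ ψ => φ.atoms ∪ ψ.atoms
  | disj φ ψ => φ.atoms ∪ ψ.atoms

/-- Conjunction of a list of formulas. -/
def conjList (l : List (PForm α)) : PForm α := l.foldr conj tru

end PForm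

/-- `M ≤_{P;Z} M'` : `M` agrees with `M'` on the fixed atoms `(P ∪ Z)ᶜ`
and is smaller or equal on the minimized atoms `P`. -/
def lePZ (P Z M M' : Set α) : Prop :=
  M ∩ P ⊆ M' ∩ P ∧ M ∩ (P ∪ Z)ᶜ = M' ∩ (P ∪ Z)ᶜ

/-- `M <_{P;Z} M'` (strict preference). -/
def ltPZ (P Z M M' : Set α) : Prop := lePZ P Z M M' ∧ ¬ lePZ P Z M' M

/-- A block `{C : B₁,…,Bₘ}` of a nested abnormality theory: the described atoms `C`,
the members that are propositional formulas, and the members that are blocks. -/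
inductive Block (α : Type u) : Type u where
  | mk : Set α → List (PForm α) → List (Block α) → Block α

/-- Satisfaction of a block: `M ⊨ {C : B₁,…,Bₘ}` iff some interpretation `M*` agreeing
with `M` outside `Ab` satisfies every member and is `(Ab;C)`-minimal doing so. -/
def Block.sat (Ab : Set α) : Block α → Set α → Prop
  | .mk C fs bs, M =>
      ∃ Ms : Set α, Ms ∩ Abᶜ = M ∩ Abᶜ ∧
        ((∀ f ∈ fs, f.sat Ms) ∧ ∀ b ∈ bs, Block.sat Ab b Ms) ∧
        ∀ N : Set α, ((∀ f ∈ fs, f.sat N) ∧ ∀ b ∈ bs, Block.sat Ab b N) → ¬ ltPZ Ab C N Ms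

/-- A nested abnormality theory (NAT): a finite collection of blocks. -/
abbrev NAT (α : Type u) := List (Block α)

/-- `M ⊨ T` iff `M` satisfies every block of `T`. -/
def NAT.sat (Ab : Set α) (T : NAT α) (M : Set α) : Prop := ∀ B ∈ T, Block.sat Ab B M

/-- Renaming the atoms of a propositional formula. -/
def PForm.map {β : Type u} (g : α → β) : PForm α → PForm β
  | .tru => .tru
  | .fls => .fls
  | .atom a => .atom (g a)
  | .neg φ => .neg (φ.map g)
  | .conj φ ψ => .conj (φ.map g) (ψ.map g)
  | .disj φ ψ => .disj (φ.map g) (ψ.map g)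

/-- Formulas of `L_CIRC` over atoms `β` (with a constant `tru` for building conjunctions). -/
inductive LCirc (β : Type u) : Type u where
  | tru : LCirc β
  | atom : β → LCirc β
  | conj : LCirc β → LCirc β → LCirc β
  | neg : LCirc β → LCirc β
  | circ : LCirc β → Set β → Set β → LCirc β

/-- Satisfaction for `L_CIRC`: models of `CIRC(φ;P;Z)` are the `(P;Z)`-minimal models of `φ`. -/
def LCirc.sat {β : Type u} : LCirc β → Set β → Prop
  | .tru, _ => True
  | .atom a, M => a ∈ M
  | .conj φ ψ, M => φ.sat M ∧ ψ.sat M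
  | .neg φ, M => ¬ φ.sat M
  | .circ φ P Z, M => φ.sat M ∧ ∀ N : Set β, φ.sat N → ¬ ltPZ P Z N M

def LCirc.conjList {β : Type u} (l : List (LCirc β)) : LCirc β := l.foldr .conj .tru

/-- Embedding propositional formulas into `L_CIRC`. -/
def LCirc.ofP {β : Type u} : PForm β → LCirc β
  | .tru => .tru
  | .fls => .neg .tru
  | .atom a => .atom a
  | .neg φ => .neg (ofP φ)
  | .conj φ ψ => .conj (ofP φ) (ofP ψ)
  | .disj φ ψ => .neg (.conj (.neg (ofP φ)) (.neg (ofP ψ)))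

/-- The extended alphabet for `σ*`: `Sum.inl a` is the original atom `a`, and
`Sum.inr (i, a)` is the `i`-th fresh renamed copy of the abnormality atom `a ∈ Ab`
(one copy per renamed quantifier `∃Ab`). -/
abbrev StarA (α : Type u) := α ⊕ ℕ × α

open Classical in
/-- Renaming of atoms for the `i`-th quantifier `∃Ab`: abnormality atoms are sent to
their `i`-th copy, all other atoms to themselves. -/
noncomputable def rn (Ab : Set α) (i : ℕ) (a : α) : StarA α :=
  if a ∈ Ab then Sum.inr (i, a) else Sum.inl a

mutual
/-- `σ*` on a single block, using copies of `Ab` numbered from `n` onwards.  Returns the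
resulting `L_CIRC` formula, the set of auxiliary atoms introduced (the renamed variables
of the dropped quantifiers), and the next unused copy number.  Following the definition
of `σ*`: all quantifiers `∃Ab` are renamed apart, every circumscriptive subformula
`CIRC(φ;P;Z)` gets the variables quantified inside `φ` added to its floating atoms, and
all quantifiers are dropped. -/
noncomputable def Block.star (Ab : Set α) :
    Block α → ℕ → LCirc (StarA α) × Set (StarA α) × ℕ
  | .mk C fs bs, n =>
      let r := Blocks.star Ab bs (n + 1)
      (LCirc.circ
          (.conj (LCirc.conjList (fs.map fun f => LCirc.ofP (f.map (rn Ab n))))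
                 (LCirc.conjList r.1))
          ((fun a => Sum.inr (n, a)) '' Ab)
          (Sum.inl '' C ∪ r.2.1),
        (fun a => Sum.inr (n, a)) '' Ab ∪ r.2.1,
        r.2.2)

/-- `σ*` on a list of blocks, threading the copy counter. -/
noncomputable def Blocks.star (Ab : Set α) :
    List (Block α) → ℕ → List (LCirc (StarA α)) × Set (StarA α) × ℕ
  | [], n => ([], ∅, n)
  | b :: bs, n =>
      let r1 := Block.star Ab b n
      let r2 := Blocks.star Ab bs r1.2.2
      (r1.1 :: r2.1, r1.2.1 ∪ r2.2.1, r2.2.2)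
end

/-- `σ*(T)` for a NAT `T`: the conjunction of the translations of its blocks, together
with the set `A*(T)` of auxiliary atoms. -/
noncomputable def NAT.star (Ab : Set α) (T : NAT α) : LCirc (StarA α) × Set (StarA α) :=
  (LCirc.conjList (Blocks.star Ab T 0).1, (Blocks.star Ab T 0).2.1)

/-- `σ*` of a single block `B = {C : B₁,…,Bₘ}` where the renaming takes place inside the
nesting: the outermost quantifier `∃Ab` keeps the original abnormality atoms, the inner
quantifiers are renamed to fresh copies. -/
noncomputable def Block.starTop (Ab : Set α) : Block α → LCirc (StarA α)
  | .mk C fs bs =>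
      let r := Blocks.star Ab bs 0
      LCirc.circ
        (.conj (LCirc.conjList (fs.map fun f => LCirc.ofP (f.map Sum.inl)))
               (LCirc.conjList r.1))
        (Sum.inl '' Ab) (Sum.inl '' C ∪ r.2.1)

/-- A witness model of a block `{C : B₁,…,Bₘ}`: an interpretation that is itself an
`(Ab;C)`-minimal model of the members. -/
def Block.witness (Ab : Set α) : Block α → Set α → Prop
  | .mk C fs bs, M =>
      ((∀ f ∈ fs, f.sat M) ∧ ∀ b ∈ bs, Block.sat Ab b M) ∧
      ∀ N : Set α, ((∀ f ∈ fs, f.sat N) ∧ ∀ b ∈ bs, Block.sat Ab b N) → ¬ ltPZ Ab C N M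

/-- Well-formed blocks: the described atoms of every block occurring in it are
atoms not in `Ab`. -/
inductive Block.WF (Ab : Set α) : Block α → Prop where
  | mk {C : Set α} {fs : List (PForm α)} {bs : List (Block α)} :
      C ⊆ Abᶜ → (∀ b ∈ bs, b.WF Ab) → Block.WF Ab (.mk C fs bs)

/-!
Write `∃A` for the quantifier forgetting the atoms `A`. The point is that a quantifier can be pulled
out of a circumscription at the price of letting the quantified atoms float:
`CIRC(∃A φ; P; Z) ≡ ∃A CIRC(φ; P; Z ∪ A)` whenever `P` and `A` are disjoint. Indeed, comparing two
interpretations with `A` floating ignores their values on `A`, and a model preferred with `A`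
floating becomes one preferred with `A` fixed once its values on `A` are overwritten.

Together with `∃A φ ∧ ψ ≡ ∃A (φ ∧ ψ)` for `ψ` independent of `A`, and with the renaming of bound
atoms, this moves all quantifiers of `σ(T)` to the front and shows that `σ(T)` is equivalent to
`∃A*(T) σ*(T)`.
-/

section Quantifier

variable {A B : Set α} {φ ψ : Set α → Prop}

theorem sdiff_eq_sdiff_of_subset (hAB : A ⊆ B) {N N' : Set α} (h : N \ A = N' \ A) :
    N \ B = N' \ B := by
  rw [← Set.union_eq_self_of_subset_left hAB, ← Set.sdiff_sdiff, h, Set.sdiff_sdiff]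

theorem sdiff_union_inter_sdiff_self (A M N : Set α) : (M \ A ∪ N ∩ A) \ A = M \ A := by
  grind

/-- The quantified formula `∃A φ`, where formulas are identified with predicates on
interpretations. -/
def ExistsAtoms (A : Set α) (φ : Set α → Prop) : Set α → Prop :=
  fun N => ∃ N', N' \ A = N \ A ∧ φ N'

/-- The truth of `φ` does not depend on the values of the atoms in `A`. -/
def IndepOf (A : Set α) (φ : Set α → Prop) : Prop :=
  ∀ ⦃N N' : Set α⦄, N \ A = N' \ A → φ N → φ N'

theorem indepOf_existsAtoms (A : Set α) (φ : Set α → Prop) : IndepOf A (ExistsAtoms A φ) :=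
  fun _ _ hNN' ⟨K, hK, hφ⟩ => ⟨K, hK.trans hNN', hφ⟩

theorem IndepOf.existsAtoms_eq (hφ : IndepOf A φ) : ExistsAtoms A φ = φ :=
  funext fun N => propext ⟨fun ⟨_, hK, hφK⟩ => hφ hK hφK, fun hN => ⟨N, rfl, hN⟩⟩

theorem IndepOf.anti (hφ : IndepOf B φ) (hAB : A ⊆ B) : IndepOf A φ := fun _ _ hNN' =>
  hφ (sdiff_eq_sdiff_of_subset hAB hNN')

theorem IndepOf.inf (hφ : IndepOf A φ) (hψ : IndepOf A ψ) : IndepOf A (φ ⊓ ψ) :=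
  fun _ _ hNN' hN => ⟨hφ hNN' hN.1, hψ hNN' hN.2⟩

theorem existsAtoms_inf_of_indepOf_right (hψ : IndepOf A ψ) :
    ExistsAtoms A (φ ⊓ ψ) = ExistsAtoms A φ ⊓ ψ :=
  funext fun _ => propext
    ⟨fun ⟨K, hK, hφK, hψK⟩ => ⟨⟨K, hK, hφK⟩, hψ hK hψK⟩,
      fun ⟨⟨K, hK, hφK⟩, hψN⟩ => ⟨K, hK, hφK, hψ hK.symm hψN⟩⟩

theorem existsAtoms_inf_of_indepOf_left (hφ : IndepOf A φ) :
    ExistsAtoms A (φ ⊓ ψ) = φ ⊓ ExistsAtoms A ψ := by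
  rw [inf_comm, existsAtoms_inf_of_indepOf_right hφ, inf_comm]

theorem existsAtoms_existsAtoms (A B : Set α) (φ : Set α → Prop) :
    ExistsAtoms A (ExistsAtoms B φ) = ExistsAtoms (A ∪ B) φ := by
  ext N
  constructor
  · rintro ⟨K, hK, L, hL, hφ⟩
    refine ⟨L, ?_, hφ⟩
    exact (sdiff_eq_sdiff_of_subset Set.subset_union_right hL).trans
      (sdiff_eq_sdiff_of_subset Set.subset_union_left hK)
  · rintro ⟨L, hL, hφ⟩
    refine ⟨N \ A ∪ L ∩ A, sdiff_union_inter_sdiff_self A N L, L, ?_, hφ⟩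
    ext x
    have hx := Set.ext_iff.1 hL x
    grind

end Quantifier

section Circumscription

variable {A P Z M M' N N' : Set α} {φ : Set α → Prop}

/-- The circumscription `CIRC(φ; P; Z)` of a predicate `φ` on interpretations. -/
def Circ (P Z : Set α) (φ : Set α → Prop) : Set α → Prop :=
  fun N => φ N ∧ ∀ N', φ N' → ¬ ltPZ P Z N' N

theorem ltPZ_iff : ltPZ P Z M N ↔ M ∩ P ⊂ N ∩ P ∧ M \ (P ∪ Z) = N \ (P ∪ Z) := by
  simp only [ltPZ, lePZ, ssubset_iff_subset_not_subset, Set.sdiff_eq]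
  grind

theorem ltPZ_union_of_ltPZ (A : Set α) (h : ltPZ P Z M N) : ltPZ P (Z ∪ A) M N := by
  rw [ltPZ_iff] at h ⊢
  exact ⟨h.1, sdiff_eq_sdiff_of_subset (by grind) h.2⟩

theorem ltPZ_union_congr (hPA : Disjoint P A) (hM : M \ A = M' \ A) (hN : N \ A = N' \ A) :
    ltPZ P (Z ∪ A) M N ↔ ltPZ P (Z ∪ A) M' N' := by
  have inter_eq (K : Set α) : K ∩ P = K \ A ∩ P := by grind
  have hA : A ⊆ P ∪ (Z ∪ A) := by grind
  rw [ltPZ_iff, ltPZ_iff, inter_eq M, inter_eq M', inter_eq N, inter_eq N', hM, hN,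
    sdiff_eq_sdiff_of_subset hA hM, sdiff_eq_sdiff_of_subset hA hN]

theorem exists_ltPZ_of_ltPZ_union (hPA : Disjoint P A) (h : ltPZ P (Z ∪ A) M N) :
    ∃ M', M' \ A = M \ A ∧ ltPZ P Z M' N := by
  have hM' := sdiff_union_inter_sdiff_self A M N
  refine ⟨M \ A ∪ N ∩ A, hM', ?_⟩
  have hlt := (ltPZ_union_congr hPA hM' rfl).2 h
  rw [ltPZ_iff] at hlt ⊢
  refine ⟨hlt.1, ?_⟩
  ext x
  have hx := Set.ext_iff.1 hlt.2 x
  grind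

theorem circ_existsAtoms (hPA : Disjoint P A) :
    Circ P Z (ExistsAtoms A φ) = ExistsAtoms A (Circ P (Z ∪ A) φ) := by
  ext N
  constructor
  · rintro ⟨⟨K, hK, hφK⟩, hmin⟩
    refine ⟨K, hK, hφK, fun L hφL hlt => ?_⟩
    obtain ⟨L', hL', hlt'⟩ := exists_ltPZ_of_ltPZ_union hPA ((ltPZ_union_congr hPA rfl hK).1 hlt)
    exact hmin L' ⟨L, hL'.symm, hφL⟩ hlt'
  · rintro ⟨K, hK, hφK, hmin⟩
    refine ⟨⟨K, hK, hφK⟩, fun L ⟨L', hL', hφL'⟩ hlt => hmin L' hφL' ?_⟩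
    exact (ltPZ_union_congr hPA hL' hK).2 (ltPZ_union_of_ltPZ A hlt)

theorem IndepOf.circ (hφ : IndepOf A φ) (hPA : Disjoint P A) : IndepOf A (Circ P Z φ) := by
  rw [← hφ.existsAtoms_eq, circ_existsAtoms hPA]
  exact indepOf_existsAtoms A _

end Circumscription

section Renaming

variable {β : Type*} {f g : α → β} {A : Set β} {P Z : Set α}

theorem preimage_eq_of_sdiff_eq (hgA : Disjoint (Set.range g) A) {N N' : Set β}
    (h : N \ A = N' \ A) : g ⁻¹' N = g ⁻¹' N' := by
  ext a
  have ha : g a ∉ A := Set.disjoint_left.1 hgA ⟨a, rfl⟩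
  simpa [ha] using Set.ext_iff.1 h (g a)

theorem preimage_sdiff_eq_of_eqOn_compl (hfg : Set.EqOn f g Pᶜ) (N : Set β) :
    f ⁻¹' N \ P = g ⁻¹' N \ P := by
  ext a
  exact and_congr_left fun ha => by rw [Set.mem_preimage, Set.mem_preimage, hfg ha]

theorem indepOf_comp_preimage (hgA : Disjoint (Set.range g) A) (φ : Set α → Prop) :
    IndepOf A (φ ∘ Set.preimage g) := fun N N' hNN' hN => by
  rwa [Function.comp_apply, ← preimage_eq_of_sdiff_eq hgA hNN']

theorem IndepOf.comp_preimage_congr {φ : Set α → Prop} (hφ : IndepOf P φ)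
    (hfg : Set.EqOn f g Pᶜ) : φ ∘ Set.preimage f = φ ∘ Set.preimage g :=
  funext fun N => propext
    ⟨hφ (preimage_sdiff_eq_of_eqOn_compl hfg N), hφ (preimage_sdiff_eq_of_eqOn_compl hfg N).symm⟩

theorem sdiff_image_eq_iff (hg : Function.Injective g) {N N' : Set β} :
    N \ g '' P = N' \ g '' P ↔
      g ⁻¹' N \ P = g ⁻¹' N' \ P ∧ N \ Set.range g = N' \ Set.range g := by
  constructor
  · intro h
    refine ⟨?_, sdiff_eq_sdiff_of_subset (Set.image_subset_range g P) h⟩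
    simpa only [Set.preimage_sdiff, hg.preimage_image] using congrArg (g ⁻¹' ·) h
  · rintro ⟨hpre, hrange⟩
    ext b
    by_cases hb : b ∈ Set.range g
    · obtain ⟨a, rfl⟩ := hb
      simpa [hg.mem_set_image] using Set.ext_iff.1 hpre a
    · have hbP : b ∉ g '' P := fun h => hb (Set.image_subset_range g P h)
      simpa [hb, hbP] using Set.ext_iff.1 hrange b

theorem ltPZ_image_iff (hg : Function.Injective g) {N N' : Set β} :
    ltPZ (g '' P) (g '' Z) N N' ↔
      ltPZ P Z (g ⁻¹' N) (g ⁻¹' N') ∧ N \ Set.range g = N' \ Set.range g := by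
  rw [ltPZ_iff, ltPZ_iff, ← Set.image_union, sdiff_image_eq_iff hg, and_assoc,
    ← Set.image_preimage_inter, ← Set.image_preimage_inter,
    hg.injOn.image_ssubset_image_iff (Set.subset_univ _) (Set.subset_univ _)]

theorem circ_comp_preimage (hg : Function.Injective g) (P Z : Set α) (φ : Set α → Prop) :
    Circ P Z φ ∘ Set.preimage g = Circ (g '' P) (g '' Z) (φ ∘ Set.preimage g) := by
  ext N
  refine and_congr_right fun _ => ⟨fun hmin K hK hlt => ?_, fun hmin M hM hlt => ?_⟩
  · exact hmin _ hK ((ltPZ_image_iff hg).1 hlt).1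
  · have hpre : g ⁻¹' (g '' M ∪ N \ Set.range g) = M := by simp [hg.preimage_image]
    refine hmin (g '' M ∪ N \ Set.range g) (by rwa [Function.comp_apply, hpre]) ?_
    rw [ltPZ_image_iff hg, hpre]
    exact ⟨hlt, by grind⟩

theorem existsAtoms_comp_preimage (hg : Function.Injective g) (hfg : Set.EqOn f g Pᶜ)
    (φ : Set α → Prop) :
    ExistsAtoms P φ ∘ Set.preimage f = ExistsAtoms (g '' P) (φ ∘ Set.preimage g) := by
  rw [(indepOf_existsAtoms P φ).comp_preimage_congr hfg]
  ext N
  constructor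
  · rintro ⟨M, hM, hφ⟩
    refine ⟨N \ g '' P ∪ g '' M ∩ g '' P, sdiff_union_inter_sdiff_self _ _ _, ?_⟩
    have hpre : g ⁻¹' (N \ g '' P ∪ g '' M ∩ g '' P) = M := by
      rw [Set.preimage_union, Set.preimage_sdiff, Set.preimage_inter, hg.preimage_image,
        hg.preimage_image, ← hM, Set.sdiff_union_inter]
    rwa [Function.comp_apply, hpre]
  · rintro ⟨K, hK, hφ⟩
    exact ⟨g ⁻¹' K, ((sdiff_image_eq_iff hg).1 hK).1, hφ⟩

theorem circ_inf_comp_preimage (hg : Function.Injective g) (hgA : Disjoint (Set.range g) A)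
    {φ χ : Set α → Prop} {ψ : Set β → Prop} (hψ : χ ∘ Set.preimage g = ExistsAtoms A ψ) :
    Circ P Z (φ ⊓ χ) ∘ Set.preimage g =
      ExistsAtoms A (Circ (g '' P) (g '' Z ∪ A) (φ ∘ Set.preimage g ⊓ ψ)) := calc
  Circ P Z (φ ⊓ χ) ∘ Set.preimage g
  _ = Circ (g '' P) (g '' Z) (φ ∘ Set.preimage g ⊓ χ ∘ Set.preimage g) :=
    circ_comp_preimage hg P Z (φ ⊓ χ)
  _ = Circ (g '' P) (g '' Z) (ExistsAtoms A (φ ∘ Set.preimage g ⊓ ψ)) := by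
    rw [hψ, existsAtoms_inf_of_indepOf_left (indepOf_comp_preimage hgA φ)]
  _ = ExistsAtoms A (Circ (g '' P) (g '' Z ∪ A) (φ ∘ Set.preimage g ⊓ ψ)) :=
    circ_existsAtoms (hgA.mono_left (Set.image_subset_range g P))

theorem iff_exists_of_comp_preimage_eq_existsAtoms (hg : Function.Injective g)
    (hgA : Disjoint (Set.range g) A) {φ : Set α → Prop} {ψ : Set β → Prop}
    (h : φ ∘ Set.preimage g = ExistsAtoms A ψ) (M : Set α) :
    φ M ↔ ∃ N, ψ N ∧ M = g ⁻¹' N := by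
  constructor
  · intro hM
    obtain ⟨N, hN, hψ⟩ : ExistsAtoms A ψ (g '' M) := by
      rwa [← h, Function.comp_apply, hg.preimage_image]
    exact ⟨N, hψ, by rw [preimage_eq_of_sdiff_eq hgA hN, hg.preimage_image]⟩
  · rintro ⟨N, hψ, rfl⟩
    rw [← Function.comp_apply (f := φ), h]
    exact ⟨N, rfl, hψ⟩

end Renaming

section Formulas

variable {β : Type u}

theorem LCirc.sat_conj (φ ψ : LCirc β) : (LCirc.conj φ ψ).sat = φ.sat ⊓ ψ.sat := rfl

theorem LCirc.sat_circ (φ : LCirc β) (P Z : Set β) :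
    (LCirc.circ φ P Z).sat = Circ P Z φ.sat := rfl

theorem LCirc.sat_ofP_map (g : α → β) (f : PForm α) :
    (LCirc.ofP (f.map g)).sat = f.sat ∘ Set.preimage g := by
  ext N
  induction f with
  | tru | fls | atom => simp [PForm.map, LCirc.ofP, LCirc.sat, PForm.sat]
  | neg φ ihφ => simp_all [PForm.map, LCirc.ofP, LCirc.sat, PForm.sat]
  | conj φ ψ ihφ ihψ => simp_all [PForm.map, LCirc.ofP, LCirc.sat, PForm.sat]
  | disj φ ψ ihφ ihψ =>
    simp_all [PForm.map, LCirc.ofP, LCirc.sat, PForm.sat, or_iff_not_imp_left]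

theorem LCirc.sat_conjList_map_ofP (g : α → β) (fs : List (PForm α)) :
    (LCirc.conjList (fs.map fun f => LCirc.ofP (f.map g))).sat =
      (fun M => ∀ f ∈ fs, f.sat M) ∘ Set.preimage g := by
  ext N
  induction fs with
  | nil => simp [LCirc.conjList, LCirc.sat]
  | cons f fs ih =>
    simp only [Function.comp_apply, List.forall_mem_cons] at ih ⊢
    exact and_congr (iff_of_eq (congrFun (LCirc.sat_ofP_map g f) N)) ih

end Formulas

section Blocks

variable (Ab : Set α)

theorem Block.witness_mk (C : Set α) (fs : List (PForm α)) (bs : List (Block α)) :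
    Block.witness Ab (.mk C fs bs) = Circ Ab C ((fun M => ∀ f ∈ fs, f.sat M) ⊓ NAT.sat Ab bs) :=
  rfl

theorem Block.sat_eq_existsAtoms (B : Block α) :
    B.sat Ab = ExistsAtoms Ab (B.witness Ab) := by
  obtain ⟨C, fs, bs⟩ := B
  ext M
  rw [Block.sat]
  rfl

theorem NAT.indepOf_sat (T : NAT α) : IndepOf Ab (NAT.sat Ab T) := by
  intro M M' hMM' hM B hB
  have hsat := hM B hB
  rw [Block.sat_eq_existsAtoms] at hsat ⊢
  exact indepOf_existsAtoms Ab _ hMM' hsat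

theorem NAT.sat_nil : NAT.sat Ab [] = ⊤ := by
  ext M
  simp [NAT.sat]

theorem NAT.sat_cons (B : Block α) (T : NAT α) :
    NAT.sat Ab (B :: T) = B.sat Ab ⊓ NAT.sat Ab T := by
  ext M
  exact List.forall_mem_cons

end Blocks

section Copies

variable {Ab : Set α} {n : ℕ} {I J : Set ℕ}

/-- The atoms of `StarA α` that are copies with index in `I`, of abnormality atoms or not. -/
def copyAtoms (I : Set ℕ) : Set (StarA α) := Sum.inr '' (Prod.fst ⁻¹' I)

theorem copyAtoms_mono (hIJ : I ⊆ J) : (copyAtoms I : Set (StarA α)) ⊆ copyAtoms J :=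
  Set.image_mono (Set.preimage_mono hIJ)

theorem disjoint_range_inl_copyAtoms (I : Set ℕ) :
    Disjoint (Set.range Sum.inl) (copyAtoms I : Set (StarA α)) :=
  Set.isCompl_range_inl_range_inr.disjoint.mono_right (Set.image_subset_range _ _)

theorem rn_of_mem {a : α} (ha : a ∈ Ab) : rn Ab n a = Sum.inr (n, a) := if_pos ha

theorem rn_of_notMem {a : α} (ha : a ∉ Ab) : rn Ab n a = Sum.inl a := if_neg ha

theorem rn_injective (Ab : Set α) (n : ℕ) : Function.Injective (rn Ab n) := by
  intro a b hab
  by_cases ha : a ∈ Ab <;> by_cases hb : b ∈ Ab <;> simp_all [rn]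

theorem eqOn_inl_rn (Ab : Set α) (n : ℕ) : Set.EqOn Sum.inl (rn Ab n) Abᶜ :=
  fun _ ha => (rn_of_notMem ha).symm

theorem eqOn_inr_rn (Ab : Set α) (n : ℕ) : Set.EqOn (fun a => Sum.inr (n, a)) (rn Ab n) Ab :=
  fun _ ha => (rn_of_mem ha).symm

theorem image_rn_subset_copyAtoms (hn : n ∈ I) : rn Ab n '' Ab ⊆ copyAtoms I := by
  rintro _ ⟨a, ha, rfl⟩
  exact ⟨(n, a), hn, (rn_of_mem ha).symm⟩

theorem disjoint_range_rn_copyAtoms (hn : n ∉ I) :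
    Disjoint (Set.range (rn Ab n)) (copyAtoms I) := by
  rw [Set.disjoint_left]
  rintro _ ⟨a, rfl⟩ ⟨⟨i, b⟩, hi, hrn⟩
  by_cases ha : a ∈ Ab
  · rw [rn_of_mem ha, Sum.inr.injEq, Prod.mk.injEq] at hrn
    exact hn (hrn.1 ▸ hi)
  · rw [rn_of_notMem ha] at hrn
    exact Sum.inr_ne_inl hrn

theorem Block.star_mk {C : Set α} (hC : C ⊆ Abᶜ) (fs : List (PForm α)) (bs : List (Block α))
    (n : ℕ) :
    Block.star Ab (.mk C fs bs) n =
      (.circ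
        (.conj (LCirc.conjList (fs.map fun f => LCirc.ofP (f.map (rn Ab n))))
          (LCirc.conjList (Blocks.star Ab bs (n + 1)).1))
        (rn Ab n '' Ab) (rn Ab n '' C ∪ (Blocks.star Ab bs (n + 1)).2.1),
      rn Ab n '' Ab ∪ (Blocks.star Ab bs (n + 1)).2.1,
      (Blocks.star Ab bs (n + 1)).2.2) := by
  rw [Block.star, (eqOn_inr_rn Ab n).image_eq, ((eqOn_inl_rn Ab n).mono hC).image_eq]

end Copies

section Translation

variable {Q R : Set α → Prop} {φ ψ : LCirc (StarA α)} {A B : Set (StarA α)} {k m n : ℕ}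

/-- `Q`, a condition on interpretations of the original atoms, is translated into the formula `φ`
with auxiliary atoms `A`, using the copies with index from `n` up to but excluding `m`. Freshness of
the copies is recorded in two ways: `A` consists of such copies, and `φ` depends on no others. -/
structure IsTranslation (Q : Set α → Prop) (φ : LCirc (StarA α)) (A : Set (StarA α))
    (n m : ℕ) : Prop where
  le : n ≤ m
  subset_copyAtoms : A ⊆ copyAtoms (Set.Ico n m)
  indepOf : IndepOf (copyAtoms (Set.Ico n m)ᶜ) φ.sat
  comp_preimage_eq : Q ∘ Set.preimage Sum.inl = ExistsAtoms A φ.sat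

theorem IsTranslation.disjoint_range_inl (h : IsTranslation Q φ A n m) :
    Disjoint (Set.range Sum.inl) A :=
  (disjoint_range_inl_copyAtoms _).mono_right h.subset_copyAtoms

theorem isTranslation_tru (n : ℕ) : IsTranslation (⊤ : Set α → Prop) .tru ∅ n n where
  le := le_rfl
  subset_copyAtoms := Set.empty_subset _
  indepOf _ _ _ _ := trivial
  comp_preimage_eq := funext fun N => propext ⟨fun _ => ⟨N, rfl, trivial⟩, fun _ => trivial⟩

theorem IsTranslation.conj (hφ : IsTranslation Q φ A n m) (hψ : IsTranslation R ψ B m k) :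
    IsTranslation (Q ⊓ R) (.conj φ ψ) (A ∪ B) n k where
  le := hφ.le.trans hψ.le
  subset_copyAtoms := Set.union_subset
    (hφ.subset_copyAtoms.trans (copyAtoms_mono (Set.Ico_subset_Ico_right hψ.le)))
    (hψ.subset_copyAtoms.trans (copyAtoms_mono (Set.Ico_subset_Ico_left hφ.le)))
  indepOf := .inf
    (hφ.indepOf.anti (copyAtoms_mono (Set.compl_subset_compl.2 (Set.Ico_subset_Ico_right hψ.le))))
    (hψ.indepOf.anti (copyAtoms_mono (Set.compl_subset_compl.2 (Set.Ico_subset_Ico_left hφ.le))))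
  comp_preimage_eq := by
    have hR : IndepOf A (R ∘ Set.preimage Sum.inl) := indepOf_comp_preimage hφ.disjoint_range_inl R
    have hφB : IndepOf B φ.sat := hφ.indepOf.anti <| hψ.subset_copyAtoms.trans <|
      copyAtoms_mono (Set.Ico_disjoint_Ico_same.subset_compl_left)
    calc (Q ⊓ R) ∘ Set.preimage Sum.inl
      _ = ExistsAtoms A φ.sat ⊓ R ∘ Set.preimage Sum.inl := by rw [← hφ.comp_preimage_eq]; rfl
      _ = ExistsAtoms A (φ.sat ⊓ ExistsAtoms B ψ.sat) := by
        rw [← existsAtoms_inf_of_indepOf_right hR, hψ.comp_preimage_eq]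
      _ = ExistsAtoms (A ∪ B) (φ.sat ⊓ ψ.sat) := by
        rw [← existsAtoms_inf_of_indepOf_left hφB, existsAtoms_existsAtoms]

theorem IsTranslation.circ {Ab C : Set α} {χ : LCirc (StarA α)}
    (hψ : IsTranslation Q ψ A (n + 1) m) (hQ : IndepOf Ab Q)
    (hχ : χ.sat = R ∘ Set.preimage (rn Ab n)) :
    IsTranslation (ExistsAtoms Ab (Circ Ab C (R ⊓ Q)))
      (.circ (.conj χ ψ) (rn Ab n '' Ab) (rn Ab n '' C ∪ A)) (rn Ab n '' Ab ∪ A) n m where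
  le := n.le_succ.trans hψ.le
  subset_copyAtoms := Set.union_subset (image_rn_subset_copyAtoms ⟨le_rfl, hψ.le⟩)
    (hψ.subset_copyAtoms.trans (copyAtoms_mono (Set.Ico_subset_Ico_left n.le_succ)))
  indepOf := by
    have hrn : Disjoint (Set.range (rn Ab n)) (copyAtoms (Set.Ico n m)ᶜ) :=
      disjoint_range_rn_copyAtoms fun hn => hn ⟨le_rfl, hψ.le⟩
    have hψn : IndepOf (copyAtoms (Set.Ico n m)ᶜ) ψ.sat := hψ.indepOf.anti <|
      copyAtoms_mono (Set.compl_subset_compl.2 (Set.Ico_subset_Ico_left n.le_succ))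
    rw [LCirc.sat_circ, LCirc.sat_conj, hχ]
    exact ((indepOf_comp_preimage hrn R).inf hψn).circ
      (hrn.mono_left (Set.image_subset_range _ _))
  comp_preimage_eq := by
    have hQψ : Q ∘ Set.preimage (rn Ab n) = ExistsAtoms A ψ.sat := by
      rw [← hQ.comp_preimage_congr (eqOn_inl_rn Ab n), hψ.comp_preimage_eq]
    have hrnA : Disjoint (Set.range (rn Ab n)) A :=
      (disjoint_range_rn_copyAtoms (by simp)).mono_right hψ.subset_copyAtoms
    rw [existsAtoms_comp_preimage (rn_injective Ab n) (eqOn_inl_rn Ab n),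
      circ_inf_comp_preimage (rn_injective Ab n) hrnA hQψ, existsAtoms_existsAtoms,
      LCirc.sat_circ, LCirc.sat_conj, hχ]

mutual

theorem Block.isTranslation_star {Ab : Set α} : ∀ (B : Block α), B.WF Ab → ∀ n : ℕ,
    IsTranslation (B.sat Ab) (Block.star Ab B n).1 (Block.star Ab B n).2.1 n
      (Block.star Ab B n).2.2
  | .mk C fs bs, .mk hC hbs, n => by
    rw [Block.star_mk hC, Block.sat_eq_existsAtoms, Block.witness_mk]
    exact (Blocks.isTranslation_star bs hbs (n + 1)).circ (NAT.indepOf_sat Ab bs)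
      (LCirc.sat_conjList_map_ofP (rn Ab n) fs)

theorem Blocks.isTranslation_star {Ab : Set α} : ∀ (bs : List (Block α)), (∀ b ∈ bs, b.WF Ab) →
    ∀ n : ℕ, IsTranslation (NAT.sat Ab bs) (LCirc.conjList (Blocks.star Ab bs n).1)
      (Blocks.star Ab bs n).2.1 n (Blocks.star Ab bs n).2.2
  | [], _, n => by
    rw [Blocks.star, NAT.sat_nil]
    exact isTranslation_tru n
  | b :: bs, hwf, n => by
    obtain ⟨hb, hbs⟩ := List.forall_mem_cons.1 hwf
    rw [Blocks.star, NAT.sat_cons]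
    exact (Block.isTranslation_star b hb n).conj (Blocks.isTranslation_star bs hbs _)

end

theorem Block.witness_iff_exists_starTop {Ab : Set α} {B : Block α} (hB : B.WF Ab) (M : Set α) :
    B.witness Ab M ↔ ∃ N, (Block.starTop Ab B).sat N ∧ M = Sum.inl ⁻¹' N := by
  obtain ⟨C, fs, bs⟩ := B
  obtain ⟨-, hbs⟩ := hB
  have h := Blocks.isTranslation_star bs hbs 0
  refine iff_exists_of_comp_preimage_eq_existsAtoms Sum.inl_injective h.disjoint_range_inl ?_ M
  rw [Block.witness_mk,
    circ_inf_comp_preimage Sum.inl_injective h.disjoint_range_inl h.comp_preimage_eq,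
    Block.starTop, LCirc.sat_circ, LCirc.sat_conj, LCirc.sat_conjList_map_ofP]

theorem NAT.sat_iff_exists_star {Ab : Set α} {T : NAT α} (hT : ∀ B ∈ T, B.WF Ab) (M : Set α) :
    NAT.sat Ab T M ↔ ∃ N, (NAT.star Ab T).1.sat N ∧ M = Sum.inl ⁻¹' N :=
  have h := Blocks.isTranslation_star T hT 0
  iff_exists_of_comp_preimage_eq_existsAtoms Sum.inl_injective h.disjoint_range_inl
    h.comp_preimage_eq M

end Translation

/-- For any NAT `T`, the formulas `σ(T)` and `σ*(T)` are logically
equivalent modulo the auxiliary atoms `A*(T)`: every model of `σ(T)` can be extended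
to a model of `σ*(T)`, and the restriction to the original atoms of every model of
`σ*(T)` is a model of `σ(T)`.  Moreover, if `T` is a single block `B` and the
renaming in `σ*` takes place inside the nesting, then `M` is a witness model of `B`
iff `M = N[At]` for some model `N` of `σ*(T)`. -/
theorem sigma_star_equivalence (Ab : Set α) :
    (∀ T : NAT α, (∀ B ∈ T, B.WF Ab) →
      (∀ M : Set α, NAT.sat Ab T M →
          ∃ N : Set (StarA α), Sum.inl ⁻¹' N = M ∧ (NAT.star Ab T).1.sat N) ∧
      (∀ N : Set (StarA α), (NAT.star Ab T).1.sat N → NAT.sat Ab T (Sum.inl ⁻¹' N))) ∧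
    (∀ B : Block α, B.WF Ab →
      ∀ M : Set α,
        Block.witness Ab B M ↔
          ∃ N : Set (StarA α), (Block.starTop Ab B).sat N ∧ M = Sum.inl ⁻¹' N) := by
  refine ⟨fun T hT => ⟨fun M hM => ?_, fun N hN => ?_⟩,
    fun B hB => Block.witness_iff_exists_starTop hB⟩
  · obtain ⟨N, hN, rfl⟩ := (NAT.sat_iff_exists_star hT M).1 hM
    exact ⟨N, rfl, hN⟩
  · exact (NAT.sat_iff_exists_star hT _).2 ⟨N, hN, rfl⟩

end NestedCirc
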